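/- arXiv:2001.08265 — 2 statements merged into one kernel-verified Lean document; each statement's English description precedes it below -/
import Mathlib

section
/- Suppose F satisfies (G1). Then the transfer operator weakly contracts the ‖·‖_∞ norm: for every μ ∈ L^∞, ‖F^*μ‖_∞ ≤ ‖μ‖_∞. -/
open MeasureTheory ENNReal Set

namespace RDS

/-- The one-sided subshift of finite type `Σ_A^+` determined by the 0-1 matrix `A`. -/
abbrev SigmaA (N : ℕ) (A : Fin N → Fin N → Bool) :=
  {x : ℕ → Fin N // ∀ i, A (x i) (x (i + 1)) = true}

variable {N : ℕ} {A : Fin N → Fin N → Bool}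

/-- The shift map `σ` on `Σ_A^+`. -/
def shift (x : SigmaA N A) : SigmaA N A :=
  ⟨fun i => x.val (i + 1), fun i => x.prop (i + 1)⟩

/-- Aperiodicity of a 0-1 matrix: some power has all entries positive. -/
def Aperiodic (A : Fin N → Fin N → Bool) : Prop :=
  ∃ k : ℕ, 0 < k ∧ ∀ i j,
    0 < ((Matrix.of fun a b => if A a b then (1 : ℕ) else 0) ^ k) i j

/-- The metric `d_θ(x,y) = Σ_i θ^i (1 - δ(x_i, y_i))` on `Σ_A^+`. -/
noncomputable def dTheta (θ : ℝ) (x y : SigmaA N A) : ℝ :=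
  ∑' i : ℕ, θ ^ i * (if x.val i = y.val i then (0 : ℝ) else 1)

/-- Cylinder sets of `Σ_A^+`. -/
def cylinder (n : ℕ) (w : Fin (n + 1) → Fin N) : Set (SigmaA N A) :=
  {x | ∀ i : Fin (n + 1), x.val i = w i}

/-- `m` is a Markov measure on `Σ_A^+` compatible with `A`: it is given on
cylinders by a stochastic matrix `P` (vanishing where `A` vanishes) and a
stationary probability vector `p`. -/
def IsMarkov (m : Measure (SigmaA N A)) : Prop :=
  ∃ (p : Fin N → ℝ≥0∞) (P : Fin N → Fin N → ℝ≥0∞),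
    (∑ i, p i = 1) ∧ (∀ i, ∑ j, P i j = 1) ∧ (∀ j, ∑ i, p i * P i j = p j) ∧
    (∀ i j, A i j = false → P i j = 0) ∧
    ∀ (n : ℕ) (w : Fin (n + 1) → Fin N),
      m (cylinder n w) = p (w 0) * ∏ i : Fin n, P (w i.castSucc) (w i.succ)

/-- `σ_i⁻¹(γ)`: the sequence `γ` with the symbol `i` prepended
(defined when `A i γ₀ = 1`), i.e. the inverse branch of the restriction `σ_i`
of `σ` to the cylinder `[i]`. -/
def prepend (i : Fin N) (x : SigmaA N A) (h : A i (x.val 0) = true) : SigmaA N A :=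
  ⟨fun n => match n with
    | 0 => i
    | Nat.succ k => x.val k,
   fun j => match j with
    | 0 => h
    | Nat.succ k => x.prop k⟩

/-- `f` is `L`-Lipschitz with respect to the distance function `d`. -/
def LipWithD {X : Type*} (d : X → X → ℝ) (L : ℝ) (f : X → ℝ) : Prop :=
  ∀ x y, |f x - f y| ≤ L * d x y

/-- `f` is Lipschitz with respect to the distance function `d`. -/
def LipD {X : Type*} (d : X → X → ℝ) (f : X → ℝ) : Prop :=
  ∃ L : ℝ, LipWithD d L f

/-- The best Lipschitz constant of `f` with respect to `d` (valued in `ℝ≥0∞`). -/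
noncomputable def lipConst {X : Type*} (d : X → X → ℝ) (f : X → ℝ) : ℝ≥0∞ :=
  ⨆ (x : X) (y : X), ENNReal.ofReal (|f x - f y| / d x y)

/-- The sup norm of `f` (valued in `ℝ≥0∞`). -/
noncomputable def supNormE {X : Type*} (f : X → ℝ) : ℝ≥0∞ :=
  ⨆ x : X, ENNReal.ofReal |f x|

/-- The norm `‖f‖_θ = ‖f‖_∞ + Lip_d(f)`. -/
noncomputable def thetaNorm {X : Type*} (d : X → X → ℝ) (f : X → ℝ) : ℝ≥0∞ :=
  supNormE f + lipConst d f

/-- The Perron-Frobenius operator duality characterizing `P_σ`: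
`∫ P_σ(φ) · ψ dm = ∫ φ · (ψ ∘ σ) dm` for integrable `φ` and bounded measurable `ψ`. -/
def IsPerronFrobenius (m : Measure (SigmaA N A))
    (Pσ : (SigmaA N A → ℝ) → SigmaA N A → ℝ) : Prop :=
  ∀ φ ψ : SigmaA N A → ℝ, Integrable φ m → Measurable ψ → (∃ C, ∀ x, |ψ x| ≤ C) →
    ∫ x, Pσ φ x * ψ x ∂m = ∫ x, φ x * ψ (shift x) ∂m

/-- Spectral gap for `P_σ` on `d_θ`-Lipschitz functions with constants `D`, `r`:
`‖P_σ^n φ‖_θ ≤ D r^n ‖φ‖_θ` for all `n` and all `d_θ`-Lipschitz `φ` with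
`∫ φ dm = 0`. -/
def HasGap (m : Measure (SigmaA N A)) (θ : ℝ)
    (Pσ : (SigmaA N A → ℝ) → SigmaA N A → ℝ) (D r : ℝ) : Prop :=
  ∀ φ : SigmaA N A → ℝ, LipD (dTheta θ) φ → (∫ x, φ x ∂m) = 0 →
    ∀ n : ℕ, thetaNorm (dTheta θ) (Pσ^[n] φ) ≤
      ENNReal.ofReal (D * r ^ n) * thetaNorm (dTheta θ) φ

/-- `Jm i` is the Jacobian `J_{m,σ_i}` of `m` with respect to the branch `σ_i`
(the restriction of `σ` to the cylinder `[i]`): `m (σ_i(E)) = ∫_E J_{m,σ_i} dm`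
for every measurable `E` (intersected with `[i]`). -/
def IsJacobian (m : Measure (SigmaA N A)) (Jm : Fin N → SigmaA N A → ℝ) : Prop :=
  ∀ (i : Fin N) (E : Set (SigmaA N A)), MeasurableSet E →
    m {γ : SigmaA N A | ∃ h : A i (γ.val 0) = true, prepend i γ h ∈ E} =
      ∫⁻ x in E ∩ {x : SigmaA N A | x.val 0 = i}, ENNReal.ofReal (Jm i x) ∂m

variable {K : Type*} [MetricSpace K] [MeasurableSpace K]

/-- The Wasserstein-Kantorovich like distance `W(ν₁,ν₂)`: the supremum of
`|∫ g dν₁ - ∫ g dν₂|` over `g : K → ℝ` with `Lip(g) ≤ 1` and `‖g‖_∞ ≤ 1`.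
Applied with `ν₂ = 0` it gives the norm `‖ν₁‖_W`; applied to the two parts of a
decomposition of a signed measure it gives its `‖·‖_W` norm. -/
noncomputable def wDist (ν₁ ν₂ : Measure K) : ℝ≥0∞ :=
  ⨆ g : {g : K → ℝ // LipschitzWith 1 g ∧ ∀ z, |g z| ≤ 1},
    ENNReal.ofReal |∫ z, g.val z ∂ν₁ - ∫ z, g.val z ∂ν₂|

/-- The skew product `F(x,z) = (σ(x), G(x,z))`. -/
def skew (G : SigmaA N A × K → K) (p : SigmaA N A × K) : SigmaA N A × K :=
  (shift p.1, G p)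

/-- The transfer operator `F^* μ (E) = μ (F⁻¹ E)` acting on signed measures. -/
noncomputable def transfer (G : SigmaA N A × K → K)
    (μ : SignedMeasure (SigmaA N A × K)) : SignedMeasure (SigmaA N A × K) :=
  μ.map (skew G)

/-- Condition (G1): uniform contraction of the vertical fibers with rate `α`. -/
def CondG1 (G : SigmaA N A × K → K) (α : ℝ) : Prop :=
  ∀ (x : SigmaA N A) (z₁ z₂ : K), dist (G (x, z₁)) (G (x, z₂)) ≤ α * dist z₁ z₂

/-- Condition (G2): `x ↦ G(x,z)` is `d_θ`-Lipschitz with constant `H`,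
uniformly in `z`. -/
def CondG2 (θ : ℝ) (G : SigmaA N A × K → K) (H : ℝ) : Prop :=
  ∀ (z : K) (x y : SigmaA N A), dist (G (x, z)) (G (y, z)) ≤ H * dTheta θ x y

/-- `T` is (the path `γ ↦ μ|_γ` of) a disintegration of `μ` along the vertical
fibers, over the reference measure `m`: `μ(E) = ∫ (μ|_γ)(E ∩ γ) dm(γ)`. -/
def IsDisint (m : Measure (SigmaA N A)) (μ : Measure (SigmaA N A × K))
    (T : SigmaA N A → Measure K) : Prop :=
  (∀ E : Set (SigmaA N A × K), MeasurableSet E →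
      μ E = ∫⁻ γ, T γ {z | (γ, z) ∈ E} ∂m) ∧
  ∀ E : Set K, MeasurableSet E → Measurable fun γ => T γ E

/-- The (essential) `‖·‖_W`-Lipschitz constant of a path of measures,
`|Γ|_θ^ω = ess sup_{γ₁ ≠ γ₂} ‖Γ(γ₁) - Γ(γ₂)‖_W / d_θ(γ₁,γ₂)`. -/
noncomputable def pathLip (m : Measure (SigmaA N A)) (θ : ℝ)
    (T : SigmaA N A → Measure K) : ℝ≥0∞ :=
  essSup (fun p : SigmaA N A × SigmaA N A =>
    wDist (T p.1) (T p.2) / ENNReal.ofReal (dTheta θ p.1 p.2)) (m.prod m)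

/-- The Lipschitz constant `|μ|_θ` of a positive measure: the infimum over
disintegrations `ω` of `μ` of `|μ|_θ^ω`. -/
noncomputable def lipDisint (m : Measure (SigmaA N A)) (θ : ℝ)
    (μ : Measure (SigmaA N A × K)) : ℝ≥0∞ :=
  ⨅ T : {T : SigmaA N A → Measure K // IsDisint m μ T}, pathLip m θ T.val

/-- The fiberwise transfer formula: the path representing `F^*μ` induced by the
path `T` representing `μ`, i.e.
`γ ↦ Σ_i 1_{σ([i])}(γ) (F_{iγ})_*(T(iγ)) / J_{m,σ_i}(iγ)`. -/
noncomputable def transferPath (G : SigmaA N A × K → K) (Jm : Fin N → SigmaA N A → ℝ)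
    (T : SigmaA N A → Measure K) : SigmaA N A → Measure K :=
  fun γ => ∑ i : Fin N, if h : A i (γ.val 0) = true then
      ENNReal.ofReal ((Jm i (prepend i γ h))⁻¹) •
        ((T (prepend i γ h)).map fun z => G (prepend i γ h, z))
    else 0

variable [BorelSpace K] [CompactSpace K] [Nonempty K]

/-- The fiberwise restriction `μ|_γ = π₂_* (φ₁(γ) μ_γ)` of a finite positive
measure `μ` on `Σ_A^+ × K`, where `({μ_γ}_γ, φ₁ m)` is the Rokhlin
disintegration of `μ` along the vertical fibers and `φ₁ = d(π₁_*μ)/dm`. -/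
noncomputable def fiberR (m : Measure (SigmaA N A))
    (μ : Measure (SigmaA N A × K)) (γ : SigmaA N A) : Measure K := by
  by_cases h : IsFiniteMeasure μ
  · haveI := h
    exact (μ.fst.rnDeriv m γ) • μ.condKernel γ
  · exact 0

/-- The norm `‖μ‖_∞ = ess sup_γ ‖μ|_γ‖_W` of a signed measure written as a
difference `μ = μ₁ - μ₂` of positive measures. -/
noncomputable def infNormPair (m : Measure (SigmaA N A))
    (μ₁ μ₂ : Measure (SigmaA N A × K)) : ℝ≥0∞ :=
  essSup (fun γ => wDist (fiberR m μ₁ γ) (fiberR m μ₂ γ)) m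

/-- The marginal density `φ₁ = d(π₁_*μ)/dm` of the signed measure `μ = μ₁ - μ₂`. -/
noncomputable def phiPair (m : Measure (SigmaA N A))
    (μ₁ μ₂ : Measure (SigmaA N A × K)) (γ : SigmaA N A) : ℝ :=
  (μ₁.fst.rnDeriv m γ).toReal - (μ₂.fst.rnDeriv m γ).toReal

/-- Membership in `AB`: both parts are finite with first marginal absolutely
continuous with respect to `m`. -/
def MemABPair (m : Measure (SigmaA N A)) (μ₁ μ₂ : Measure (SigmaA N A × K)) : Prop :=
  μ₁.fst ≪ m ∧ μ₂.fst ≪ m ∧ IsFiniteMeasure μ₁ ∧ IsFiniteMeasure μ₂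

/-- Membership in `S^∞`: `μ ∈ AB`, `‖μ‖_∞ < ∞` and the marginal density `φ₁`
has a `d_θ`-Lipschitz version. -/
def MemSPair (m : Measure (SigmaA N A)) (θ : ℝ)
    (μ₁ μ₂ : Measure (SigmaA N A × K)) : Prop :=
  MemABPair m μ₁ μ₂ ∧ infNormPair m μ₁ μ₂ < ⊤ ∧
    ∃ ψ : SigmaA N A → ℝ, ψ =ᵐ[m] phiPair m μ₁ μ₂ ∧ LipD (dTheta θ) ψ

/-- `‖φ₁‖_θ`, computed on the best version of the marginal density. -/
noncomputable def thetaNormMu (m : Measure (SigmaA N A)) (θ : ℝ)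
    (μ₁ μ₂ : Measure (SigmaA N A × K)) : ℝ≥0∞ :=
  ⨅ ψ : {ψ : SigmaA N A → ℝ // ψ =ᵐ[m] phiPair m μ₁ μ₂}, thetaNorm (dTheta θ) ψ.val

/-- The norm `‖μ‖_{S^∞} = ‖φ₁‖_θ + ‖μ‖_∞`. -/
noncomputable def sNormPair (m : Measure (SigmaA N A)) (θ : ℝ)
    (μ₁ μ₂ : Measure (SigmaA N A × K)) : ℝ≥0∞ :=
  thetaNormMu m θ μ₁ μ₂ + infNormPair m μ₁ μ₂

/-- Positive part of a signed measure. -/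
noncomputable def jPos {X : Type*} [MeasurableSpace X] (μ : SignedMeasure X) : Measure X :=
  μ.toJordanDecomposition.posPart

/-- Negative part of a signed measure. -/
noncomputable def jNeg {X : Type*} [MeasurableSpace X] (μ : SignedMeasure X) : Measure X :=
  μ.toJordanDecomposition.negPart

/-- Membership in `AB` for signed measures. -/
def MemAB (m : Measure (SigmaA N A)) (μ : SignedMeasure (SigmaA N A × K)) : Prop :=
  MemABPair m (jPos μ) (jNeg μ)

/-- Membership in `S^∞` for signed measures. -/
def MemS (m : Measure (SigmaA N A)) (θ : ℝ) (μ : SignedMeasure (SigmaA N A × K)) : Prop :=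
  MemSPair m θ (jPos μ) (jNeg μ)

/-- `‖μ‖_∞` for signed measures. -/
noncomputable def infNorm (m : Measure (SigmaA N A))
    (μ : SignedMeasure (SigmaA N A × K)) : ℝ≥0∞ :=
  infNormPair m (jPos μ) (jNeg μ)

/-- `‖μ‖_{S^∞}` for signed measures. -/
noncomputable def sNorm (m : Measure (SigmaA N A)) (θ : ℝ)
    (μ : SignedMeasure (SigmaA N A × K)) : ℝ≥0∞ :=
  sNormPair m θ (jPos μ) (jNeg μ)

/-- `‖φ₁‖_∞` of the marginal density of a signed measure. -/
noncomputable def phiSup (m : Measure (SigmaA N A))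
    (μ : SignedMeasure (SigmaA N A × K)) : ℝ≥0∞ :=
  essSup (fun γ => ENNReal.ofReal |phiPair m (jPos μ) (jNeg μ) γ|) m

theorem fiberR_eq (m : Measure (SigmaA N A)) (μ : Measure (SigmaA N A × K)) [h : IsFiniteMeasure μ]
    (γ : SigmaA N A) : fiberR m μ γ = (μ.fst.rnDeriv m γ) • μ.condKernel γ := by
  unfold fiberR
  rw [dif_pos h]

theorem fiberR_integral (m : Measure (SigmaA N A)) [IsProbabilityMeasure m]
    (μ : Measure (SigmaA N A × K)) [h : IsFiniteMeasure μ] (hac : μ.fst ≪ m)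
    (f : SigmaA N A × K → ℝ) (hf : Integrable f μ) :
    Integrable (fun γ => ∫ z, f (γ, z) ∂(fiberR m μ γ)) m ∧
    ∫ γ, ∫ z, f (γ, z) ∂(fiberR m μ γ) ∂m = ∫ p, f p ∂μ := by
  have e : ∀ γ, ∫ z, f (γ, z) ∂(fiberR m μ γ) =
      (μ.fst.rnDeriv m γ).toReal • ∫ z, f (γ, z) ∂(μ.condKernel γ) := by
    intro γ
    rw [fiberR_eq, integral_smul_measure]
  simp only [e]
  refine ⟨(integrable_rnDeriv_smul_iff hac).2 hf.integral_condKernel, ?_⟩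
  rw [integral_rnDeriv_smul hac, Measure.integral_condKernel hf]

theorem fiberR_finite (m : Measure (SigmaA N A)) [IsProbabilityMeasure m]
    (μ : Measure (SigmaA N A × K)) [h : IsFiniteMeasure μ] :
    ∀ᵐ γ ∂m, IsFiniteMeasure (fiberR m μ γ) := by
  filter_upwards [Measure.rnDeriv_lt_top μ.fst m] with γ hγ
  rw [fiberR_eq]
  exact Measure.smul_finite _ hγ.ne

theorem measurable_shift : Measurable (shift : SigmaA N A → SigmaA N A) := by
  unfold shift
  refine Measurable.subtype_mk ?_
  refine measurable_pi_lambda _ fun i => ?_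
  exact (measurable_pi_apply (i + 1)).comp measurable_subtype_coe

theorem jordan_add {X : Type*} [MeasurableSpace X] (F : X → X) (hF : Measurable F)
    (μ : SignedMeasure X) :
    jPos (μ.map F) + (jNeg μ).map F = jNeg (μ.map F) + (jPos μ).map F := by
  have : IsFiniteMeasure (jPos μ) := μ.toJordanDecomposition.posPart_finite
  have : IsFiniteMeasure (jNeg μ) := μ.toJordanDecomposition.negPart_finite
  have : IsFiniteMeasure (jPos (μ.map F)) := (SignedMeasure.toJordanDecomposition (μ.map F)).posPart_finite
  have : IsFiniteMeasure (jNeg (μ.map F)) := (SignedMeasure.toJordanDecomposition (μ.map F)).negPart_finite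
  have key : ∀ (ν : SignedMeasure X) (s : Set X), MeasurableSet s →
      ν s = (jPos ν).real s - (jNeg ν).real s := by
    intro ν s hs
    conv_lhs => rw [← SignedMeasure.toSignedMeasure_toJordanDecomposition ν]
    rw [JordanDecomposition.toSignedMeasure, Measure.toSignedMeasure_sub_apply hs]
    rfl
  ext s hs
  have h1 := key (μ.map F) s hs
  rw [VectorMeasure.map_apply _ hF hs, key μ _ (hF hs)] at h1
  rw [← ENNReal.toReal_eq_toReal_iff' (by simp) (by simp)]
  change (jPos (μ.map F) + (jNeg μ).map F).real s = (jNeg (μ.map F) + (jPos μ).map F).real s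
  rw [measureReal_add_apply, measureReal_add_apply, map_measureReal_apply hF hs,
    map_measureReal_apply hF hs]
  linarith

theorem ac_of_jordan {X : Type*} [MeasurableSpace X] {p n q r : Measure X}
    (hsing : p ⟂ₘ n) (h : p + r = n + q) : p ≪ q := by
  refine Measure.AbsolutelyContinuous.mk fun E hE hq => ?_
  obtain ⟨S, hS, hp, hn⟩ := hsing
  have h2 : p (E ∩ Sᶜ) ≤ 0 := by
    calc p (E ∩ Sᶜ) ≤ (p + r) (E ∩ Sᶜ) := by simp
      _ = (n + q) (E ∩ Sᶜ) := by rw [h]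
      _ = n (E ∩ Sᶜ) + q (E ∩ Sᶜ) := rfl
      _ ≤ n Sᶜ + q E := by gcongr <;> simp
      _ = 0 := by rw [hn, hq, add_zero]
  have : p E ≤ p S + p (E ∩ Sᶜ) := by
    refine (measure_mono ?_).trans (measure_union_le _ _)
    intro x hx
    by_cases hxs : x ∈ S
    · exact Or.inl hxs
    · exact Or.inr ⟨hx, hxs⟩
  rw [hp, zero_add] at this
  exact le_antisymm (this.trans h2) bot_le

theorem bounded_integrable {X : Type*} [MeasurableSpace X] (μ : Measure X) [IsFiniteMeasure μ]
    (f : X → ℝ) (hf : Measurable f) (hb : ∀ x, |f x| ≤ 1) : Integrable f μ :=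
  Integrable.of_bound hf.aestronglyMeasurable 1 (Filter.Eventually.of_forall hb)

theorem wDist_le_of_seq : ∃ g : ℕ → {g : K → ℝ // LipschitzWith 1 g ∧ ∀ z, |g z| ≤ 1},
    ∀ (ν₁ ν₂ : Measure K) [IsFiniteMeasure ν₁] [IsFiniteMeasure ν₂] (M : ℝ),
      (∀ n, |∫ z, (g n).val z ∂ν₁ - ∫ z, (g n).val z ∂ν₂| ≤ M) →
      wDist ν₁ ν₂ ≤ ENNReal.ofReal M := by
  let S := {g : C(K, ℝ) // LipschitzWith 1 g ∧ ∀ z, |g z| ≤ 1}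
  have : Nonempty S := ⟨⟨0, by
    refine ⟨?_, by simp⟩
    exact LipschitzWith.const' 0⟩⟩
  let d : ℕ → S := TopologicalSpace.denseSeq S
  refine ⟨fun n => ⟨(d n).1, (d n).2⟩, ?_⟩
  intro ν₁ ν₂ _ _ M hM
  have hc : ∀ (ν : Measure K) [IsFiniteMeasure ν], Continuous fun g : S => ∫ z, g.1 z ∂ν := by
    intro ν _
    refine continuous_of_dominated (bound := fun _ => 1) ?_ ?_ (integrable_const _) ?_
    · intro g
      exact g.1.continuous.measurable.aestronglyMeasurable
    · intro g
      exact Filter.Eventually.of_forall g.2.2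
    · refine Filter.Eventually.of_forall fun z => ?_
      exact (continuous_eval_const z).comp continuous_subtype_val
  refine iSup_le fun g => ENNReal.ofReal_le_ofReal ?_
  let g' : S := ⟨⟨g.1, g.2.1.continuous⟩, g.2⟩
  have hcl : IsClosed {g : S | |∫ z, g.1 z ∂ν₁ - ∫ z, g.1 z ∂ν₂| ≤ M} :=
    isClosed_le (((hc ν₁).sub (hc ν₂)).abs) continuous_const
  exact (TopologicalSpace.denseRange_denseSeq S).induction_on
    (p := fun g : S => |∫ z, g.1 z ∂ν₁ - ∫ z, g.1 z ∂ν₂| ≤ M) g' hcl hM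

theorem ind_mul_bound {X Y : Type*} (B : Set X) (g : X × Y → ℝ) (hb : ∀ p, |g p| ≤ 1) (p : X × Y) :
    |B.indicator (fun _ => (1 : ℝ)) p.1 * g p| ≤ 1 := by
  by_cases h : p.1 ∈ B
  · simpa [h] using hb p
  · simp [h]

theorem main_aux
    (m : Measure (SigmaA N A)) [IsProbabilityMeasure m] (hminv : m.map shift = m)
    (G : SigmaA N A × K → K) (hGm : Measurable (skew G))
    (α : ℝ) (hα0 : 0 < α) (hα1 : α < 1) (hG1 : CondG1 G α)
    (μ : SignedMeasure (SigmaA N A × K))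
    (hAB : MemAB m μ) (hfin : infNorm m μ < ⊤) :
    infNorm m (transfer G μ) ≤ infNorm m μ := by
  set ν := transfer G μ with hν
  set M : ℝ := (infNorm m μ).toReal with hM
  obtain ⟨hacp, hacn, fp, fn⟩ := hAB
  have : IsFiniteMeasure (jPos ν) := ν.toJordanDecomposition.posPart_finite
  have : IsFiniteMeasure (jNeg ν) := ν.toJordanDecomposition.negPart_finite
  have hadd : jPos ν + (jNeg μ).map (skew G) = jNeg ν + (jPos μ).map (skew G) :=
    jordan_add (skew G) hGm μ
  have hsing : jPos ν ⟂ₘ jNeg ν := ν.toJordanDecomposition.mutuallySingular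
  have hGG : Measurable G := hGm.snd
  -- absolute continuity of marginals
  have hacF : ∀ (ρ : Measure (SigmaA N A × K)), ρ.fst ≪ m → (ρ.map (skew G)).fst ≪ m := by
    intro ρ hρ
    have : (ρ.map (skew G)).fst = ρ.fst.map shift := by
      rw [Measure.fst, Measure.fst, Measure.map_map measurable_fst hGm,
        Measure.map_map measurable_shift measurable_fst]
      rfl
    rw [this]
    conv_rhs => rw [← hminv]
    exact hρ.map measurable_shift
  have hνp : (jPos ν).fst ≪ m :=
    ((ac_of_jordan hsing hadd).map measurable_fst).trans (hacF _ hacp)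
  have hνn : (jNeg ν).fst ≪ m :=
    ((ac_of_jordan hsing.symm hadd.symm).map measurable_fst).trans (hacF _ hacn)
  -- the duality of integrals
  have hint : ∀ f : SigmaA N A × K → ℝ, Measurable f → (∀ x, |f x| ≤ 1) →
      ∫ p, f p ∂(jPos ν) - ∫ p, f p ∂(jNeg ν) =
        ∫ p, f (skew G p) ∂(jPos μ) - ∫ p, f (skew G p) ∂(jNeg μ) := by
    intro f hf hb
    have h1 : ∫ p, f p ∂(jPos ν + (jNeg μ).map (skew G)) =
      ∫ p, f p ∂(jNeg ν + (jPos μ).map (skew G)) := by rw [hadd]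
    rw [integral_add_measure (bounded_integrable _ f hf hb) (bounded_integrable _ f hf hb),
      integral_add_measure (bounded_integrable _ f hf hb) (bounded_integrable _ f hf hb),
      integral_map hGm.aemeasurable hf.aestronglyMeasurable,
      integral_map hGm.aemeasurable hf.aestronglyMeasurable] at h1
    linarith
  -- a.e. bound on fibres of μ
  have hμb : ∀ᵐ x ∂m, wDist (fiberR m (jPos μ) x) (fiberR m (jNeg μ) x) ≤ infNorm m μ :=
    ENNReal.ae_le_essSup _
  obtain ⟨g, hg⟩ := wDist_le_of_seq (K := K)
  have hmain : ∀ n, ∀ᵐ γ ∂m, |∫ z, (g n).val z ∂(fiberR m (jPos ν) γ) -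
      ∫ z, (g n).val z ∂(fiberR m (jNeg ν) γ)| ≤ M := by
    intro n
    obtain ⟨q, hqL, hqb⟩ := g n
    have hqm : Measurable q := hqL.continuous.measurable
    have hq2 : Measurable fun p : SigmaA N A × K => q p.2 := hqm.comp measurable_snd
    simp only
    have hIp := (fiberR_integral m (jPos ν) hνp (fun p => q p.2)
      (bounded_integrable _ _ hq2 fun p => hqb _)).1
    have hIn := (fiberR_integral m (jNeg ν) hνn (fun p => q p.2)
      (bounded_integrable _ _ hq2 fun p => hqb _)).1
    simp only at hIp hIn
    have hB : ∀ B : Set (SigmaA N A), MeasurableSet B →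
        |∫ γ in B, (∫ z, q z ∂(fiberR m (jPos ν) γ) - ∫ z, q z ∂(fiberR m (jNeg ν) γ)) ∂m|
          ≤ M * m.real B := by
      intro B hBm
      have ind : Measurable (B.indicator (fun _ => (1 : ℝ))) :=
        measurable_const.indicator hBm
      let C := shift ⁻¹' B
      have hCm : MeasurableSet C := measurable_shift hBm
      have indC : Measurable (C.indicator (fun _ => (1 : ℝ))) :=
        measurable_const.indicator hCm
      have hmC : m.real C = m.real B := by
        conv_rhs => rw [← hminv]
        rw [map_measureReal_apply measurable_shift hBm]
      let f : SigmaA N A × K → ℝ := fun p => B.indicator (fun _ => (1 : ℝ)) p.1 * q p.2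
      let u : SigmaA N A × K → ℝ := fun p => C.indicator (fun _ => (1 : ℝ)) p.1 * q (G p)
      have hfm : Measurable f := (ind.comp measurable_fst).mul hq2
      have hum : Measurable u := (indC.comp measurable_fst).mul (hqm.comp hGG)
      have hfb : ∀ p, |f p| ≤ 1 := ind_mul_bound B (fun p => q p.2) fun p => hqb _
      have hub : ∀ p, |u p| ≤ 1 := ind_mul_bound C (fun p => q (G p)) fun p => hqb _
      have hfu : ∀ p, f (skew G p) = u p := fun p => rfl
      have e1 := hint f hfm hfb
      simp only [hfu] at e1
      obtain ⟨i1, j1⟩ := fiberR_integral m (jPos ν) hνp f (bounded_integrable _ f hfm hfb)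
      obtain ⟨i2, j2⟩ := fiberR_integral m (jNeg ν) hνn f (bounded_integrable _ f hfm hfb)
      obtain ⟨i3, j3⟩ := fiberR_integral m (jPos μ) hacp u (bounded_integrable _ u hum hub)
      obtain ⟨i4, j4⟩ := fiberR_integral m (jNeg μ) hacn u (bounded_integrable _ u hum hub)
      rw [← j1, ← j2, ← j3, ← j4, ← integral_sub i1 i2, ← integral_sub i3 i4] at e1
      have e2 : ∫ γ in B, (∫ z, q z ∂(fiberR m (jPos ν) γ) - ∫ z, q z ∂(fiberR m (jNeg ν) γ)) ∂m
          = ∫ γ, (∫ z, f (γ, z) ∂(fiberR m (jPos ν) γ) - ∫ z, f (γ, z) ∂(fiberR m (jNeg ν) γ)) ∂m := by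
        rw [← integral_indicator hBm]
        refine integral_congr_ae (Filter.Eventually.of_forall fun γ => ?_)
        by_cases h : γ ∈ B
        · simp [f, h]
        · simp [f, h]
      rw [e2, e1]
      have e3 : ∀ᵐ x ∂m, ‖∫ z, u (x, z) ∂(fiberR m (jPos μ) x) - ∫ z, u (x, z) ∂(fiberR m (jNeg μ) x)‖
          ≤ C.indicator (fun _ => M) x := by
        filter_upwards [hμb] with x hx
        by_cases h : x ∈ C
        · have hl : LipschitzWith 1 fun z => q (G (x, z)) := by
            refine LipschitzWith.of_dist_le_mul fun a b => ?_
            have h1 := hqL.dist_le_mul (G (x, a)) (G (x, b))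
            have h2 := hG1 x a b
            simp only [NNReal.coe_one, one_mul] at h1 ⊢
            have h3 : α * dist a b ≤ dist a b := mul_le_of_le_one_left dist_nonneg hα1.le
            linarith
          have h4 := (le_iSup (fun g : {g : K → ℝ // LipschitzWith 1 g ∧ ∀ z, |g z| ≤ 1} =>
            ENNReal.ofReal |∫ z, g.val z ∂(fiberR m (jPos μ) x) -
              ∫ z, g.val z ∂(fiberR m (jNeg μ) x)|)
            ⟨fun z => q (G (x, z)), hl, fun z => hqb _⟩).trans hx
          rw [ENNReal.ofReal_le_iff_le_toReal hfin.ne] at h4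
          simpa [u, h] using h4
        · simp [u, h]
      calc |∫ x, (∫ z, u (x, z) ∂(fiberR m (jPos μ) x) - ∫ z, u (x, z) ∂(fiberR m (jNeg μ) x)) ∂m|
          ≤ ∫ x, C.indicator (fun _ => M) x ∂m :=
            norm_integral_le_of_norm_le ((integrable_const M).indicator hCm) e3
        _ = M * m.real B := by
            rw [integral_indicator hCm, setIntegral_const, hmC, smul_eq_mul, mul_comm]
    have up := ae_le_of_forall_setIntegral_le (hIp.sub hIn) (integrable_const M) (fun s hs _ => by
      rw [setIntegral_const, smul_eq_mul, mul_comm]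
      exact (le_abs_self _).trans (hB s hs))
    have lo := ae_le_of_forall_setIntegral_le (integrable_const (-M)) (hIp.sub hIn) (fun s hs _ => by
      rw [setIntegral_const, smul_eq_mul, mul_comm, neg_mul]
      exact (abs_le.1 (hB s hs)).1)
    filter_upwards [up, lo] with γ h1 h2
    exact abs_le.2 ⟨h2, h1⟩
  refine essSup_le_of_ae_le _ ?_
  filter_upwards [ae_all_iff.2 hmain, fiberR_finite m (jPos ν), fiberR_finite m (jNeg ν)]
    with γ h1 h2 h3
  have := hg (fiberR m (jPos ν) γ) (fiberR m (jNeg ν) γ) M h1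
  rwa [hM, ENNReal.ofReal_toReal hfin.ne] at this

/-- **The weak norm is weakly contracted by `F^*`.**
If `F` satisfies (G1), then `‖F^* μ‖_∞ ≤ ‖μ‖_∞` for every `μ ∈ L^∞`. -/
theorem transfer_weak_contraction
    (N : ℕ) (A : Fin N → Fin N → Bool) (hA : Aperiodic A)
    (θ : ℝ) (hθ0 : 0 < θ) (hθ1 : θ < 1)
    (m : Measure (SigmaA N A)) [IsProbabilityMeasure m]
    (hmM : IsMarkov m) (hminv : m.map shift = m)
    {K : Type*} [MetricSpace K] [CompactSpace K] [Nonempty K]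
    [MeasurableSpace K] [BorelSpace K]
    (hdiam : Metric.diam (Set.univ : Set K) = 1)
    (G : SigmaA N A × K → K) (hGm : Measurable (skew G))
    (α : ℝ) (hα0 : 0 < α) (hα1 : α < 1) (hG1 : CondG1 G α)
    (μ : SignedMeasure (SigmaA N A × K))
    (hAB : MemAB m μ) (hfin : infNorm m μ < ⊤) :
    infNorm m (transfer G μ) ≤ infNorm m μ := by
  exact main_aux m hminv G hGm α hα0 hα1 hG1 μ hAB hfin

end RDS
end

section
/- Suppose F satisfies (G1). Then for every signed measure μ ∈ S^∞ with marginal density φ₁ = d(π₁_*μ)/dm and every n ≥ 1, it holds ‖F^{*n}μ‖_∞ ≤ α^n ‖μ‖_∞ + (1/(1−α)) ‖φ₁‖_∞. -/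
open MeasureTheory ENNReal Set

namespace RDS

variable {N : ℕ} {A : Fin N → Fin N → Bool}

variable {K : Type*} [MetricSpace K] [MeasurableSpace K]

variable [BorelSpace K] [CompactSpace K] [Nonempty K]

theorem integral_fiberR (m : Measure (SigmaA N A)) (μ : Measure (SigmaA N A × K))
    [h : IsFiniteMeasure μ] (γ : SigmaA N A) (g : K → ℝ) :
    ∫ z, g z ∂(fiberR m μ γ) =
      (μ.fst.rnDeriv m γ).toReal * ∫ z, g z ∂(μ.condKernel γ) := by
  rw [fiberR_eq, integral_smul_measure, smul_eq_mul]

theorem disint_integrable (m : Measure (SigmaA N A)) [IsProbabilityMeasure m]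
    (μ : Measure (SigmaA N A × K)) [IsFiniteMeasure μ] (hμ : μ.fst ≪ m)
    (f : SigmaA N A × K → ℝ) (hf : Integrable f μ) :
    Integrable (fun γ => ∫ z, f (γ, z) ∂(fiberR m μ γ)) m := by
  simp_rw [integral_fiberR]
  exact (integrable_toReal_rnDeriv_mul_iff hμ).2 hf.integral_condKernel

theorem disint_integral (m : Measure (SigmaA N A)) [IsProbabilityMeasure m]
    (μ : Measure (SigmaA N A × K)) [IsFiniteMeasure μ] (hμ : μ.fst ≪ m)
    (f : SigmaA N A × K → ℝ) (hf : Integrable f μ) :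
    ∫ γ, (∫ z, f (γ, z) ∂(fiberR m μ γ)) ∂m = ∫ p, f p ∂μ := by
  simp_rw [integral_fiberR]
  rw [integral_toReal_rnDeriv_mul hμ, Measure.integral_condKernel hf]

theorem fiberR_finite_ae (m : Measure (SigmaA N A)) [IsProbabilityMeasure m]
    (μ : Measure (SigmaA N A × K)) [IsFiniteMeasure μ] :
    ∀ᵐ γ ∂m, IsFiniteMeasure (fiberR m μ γ) := by
  filter_upwards [Measure.rnDeriv_lt_top μ.fst m] with γ hγ
  rw [fiberR_eq]
  exact Measure.smul_finite _ hγ.ne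

theorem fiberR_real_univ (m : Measure (SigmaA N A))
    (μ : Measure (SigmaA N A × K)) [IsFiniteMeasure μ] (γ : SigmaA N A) :
    (fiberR m μ γ).real univ = (μ.fst.rnDeriv m γ).toReal := by
  rw [fiberR_eq, measureReal_def]
  simp

instance jPos_finite {X : Type*} [MeasurableSpace X] (μ : SignedMeasure X) :
    IsFiniteMeasure (jPos μ) := by unfold jPos; infer_instance

instance jNeg_finite {X : Type*} [MeasurableSpace X] (μ : SignedMeasure X) :
    IsFiniteMeasure (jNeg μ) := by unfold jNeg; infer_instance

theorem j_apply {X : Type*} [MeasurableSpace X] (μ : SignedMeasure X) (E : Set X)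
    (hE : MeasurableSet E) : μ E = (jPos μ).real E - (jNeg μ).real E := by
  conv_lhs => rw [← μ.toSignedMeasure_toJordanDecomposition]
  rw [JordanDecomposition.toSignedMeasure, _root_.sub_apply,
    Measure.toSignedMeasure_apply_measurable hE, Measure.toSignedMeasure_apply_measurable hE]
  rfl

theorem map_integral {X : Type*} [MeasurableSpace X] (μ μ' : SignedMeasure X)
    (Φ : X → X) (hΦ : Measurable Φ)
    (h : ∀ E, MeasurableSet E → μ' E = μ (Φ ⁻¹' E))
    (f : X → ℝ) (hf : Measurable f) (hb : ∀ x, |f x| ≤ 1) :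
    ∫ x, f x ∂(jPos μ') - ∫ x, f x ∂(jNeg μ') =
      ∫ x, f (Φ x) ∂(jPos μ) - ∫ x, f (Φ x) ∂(jNeg μ) := by
  have hint : ∀ ν : Measure X, IsFiniteMeasure ν → Integrable f ν := fun ν _ =>
    Integrable.of_bound hf.aestronglyMeasurable 1 (Filter.Eventually.of_forall hb)
  have key : jPos μ' + (jNeg μ).map Φ = (jPos μ).map Φ + jNeg μ' := by
    have := Measure.isFiniteMeasure_map (jPos μ) Φ
    have := Measure.isFiniteMeasure_map (jNeg μ) Φ
    ext E hE
    rw [← measureReal_eq_measureReal_iff, measureReal_add_apply, measureReal_add_apply,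
      map_measureReal_apply hΦ hE, map_measureReal_apply hΦ hE]
    have := h E hE
    rw [j_apply _ _ hE, j_apply _ _ (hΦ hE)] at this
    linarith
  have h2 := congrArg (fun ν => ∫ x, f x ∂ν) key
  rw [integral_add_measure (hint _ inferInstance) (hint _ (Measure.isFiniteMeasure_map _ _)),
    integral_add_measure (hint _ (Measure.isFiniteMeasure_map _ _)) (hint _ inferInstance),
    integral_map hΦ.aemeasurable hf.aestronglyMeasurable,
    integral_map hΦ.aemeasurable hf.aestronglyMeasurable] at h2
  linarith

theorem map_ac {X : Type*} [MeasurableSpace X] (μ μ' : SignedMeasure X)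
    (Φ : X → X) (hΦ : Measurable Φ)
    (h : ∀ E, MeasurableSet E → μ' E = μ (Φ ⁻¹' E)) :
    jPos μ' ≪ (jPos μ + jNeg μ).map Φ ∧ jNeg μ' ≪ (jPos μ + jNeg μ).map Φ := by
  refine (SignedMeasure.totalVariation_absolutelyContinuous_iff μ' _).1 ?_
  have : μ' ≪ᵥ ((jPos μ + jNeg μ).map Φ).toENNRealVectorMeasure := by
    refine VectorMeasure.AbsolutelyContinuous.mk fun E hE h0 => ?_
    rw [Measure.toENNRealVectorMeasure_apply_measurable hE, Measure.map_apply hΦ hE,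
      Measure.add_apply, add_eq_zero] at h0
    rw [h E hE, j_apply _ _ (hΦ hE), measureReal_def, measureReal_def, h0.1, h0.2]
    simp
  rw [SignedMeasure.absolutelyContinuous_ennreal_iff] at this
  simpa using this

theorem map_fst_ac (m : Measure (SigmaA N A))
    (μ : Measure (SigmaA N A × K)) (hμ : μ.fst ≪ m)
    (τ : SigmaA N A → SigmaA N A) (hτ : MeasurePreserving τ m m)
    (Φ : SigmaA N A × K → SigmaA N A × K) (hΦ : Measurable Φ)
    (hΦ1 : ∀ p, (Φ p).1 = τ p.1) (ν : Measure (SigmaA N A × K)) (hν : ν ≪ μ.map Φ) :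
    ν.fst ≪ m := by
  have h1 : ν.fst ≪ (μ.map Φ).fst := hν.map measurable_fst
  refine h1.trans ?_
  have h2 : (μ.map Φ).fst = μ.fst.map τ := by
    rw [Measure.fst, Measure.fst, Measure.map_map measurable_fst hΦ,
      Measure.map_map hτ.measurable measurable_fst]
    congr 1
    funext p
    exact hΦ1 p
  rw [h2, ← hτ.map_eq]
  conv_rhs => rw [hτ.map_eq]
  have h3 := hμ.map hτ.measurable
  rwa [hτ.map_eq] at h3

/-- fiberwise estimate -/
theorem wDist_contract (hdiam : Metric.diam (Set.univ : Set K) = 1)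
    (ν₁ ν₂ : Measure K) [IsFiniteMeasure ν₁] [IsFiniteMeasure ν₂]
    (a : ℝ) (ha : 0 < a) (h : K → ℝ)
    (hL : ∀ z w, |h z - h w| ≤ a * dist z w) (hb : ∀ z, |h z| ≤ 1)
    (W Q : ℝ) (hW0 : 0 ≤ W) (hW : wDist ν₁ ν₂ ≤ ENNReal.ofReal W)
    (hQ : |ν₁.real univ - ν₂.real univ| ≤ Q) :
    ∫ z, h z ∂ν₁ - ∫ z, h z ∂ν₂ ≤ a * W + Q := by
  obtain ⟨z0⟩ := (inferInstance : Nonempty K)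
  set k : K → ℝ := fun z => a⁻¹ * (h z - h z0) with hk
  have hkL : LipschitzWith 1 k := by
    refine LipschitzWith.of_dist_le_mul fun z w => ?_
    have e : k z - k w = a⁻¹ * (h z - h w) := by simp only [hk]; ring
    rw [Real.dist_eq, e, abs_mul, abs_of_pos (inv_pos.2 ha), NNReal.coe_one, one_mul]
    rw [inv_mul_le_iff₀ ha]
    exact hL z w
  have hkb : ∀ z, |k z| ≤ 1 := fun z => by
    simp only [hk]
    rw [abs_mul, abs_of_pos (inv_pos.2 ha), inv_mul_le_iff₀ ha]
    refine (hL z z0).trans ?_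
    gcongr
    rw [← hdiam]
    exact Metric.dist_le_diam_of_mem isCompact_univ.isBounded (mem_univ _) (mem_univ _)
  have h1 : ENNReal.ofReal |∫ z, k z ∂ν₁ - ∫ z, k z ∂ν₂| ≤ ENNReal.ofReal W :=
    (le_iSup (fun g : {g : K → ℝ // LipschitzWith 1 g ∧ ∀ z, |g z| ≤ 1} =>
      ENNReal.ofReal |∫ z, g.val z ∂ν₁ - ∫ z, g.val z ∂ν₂|) ⟨k, hkL, hkb⟩).trans hW
  have h2 := (ENNReal.ofReal_le_ofReal_iff hW0).1 h1
  have hki : ∀ ν : Measure K, IsFiniteMeasure ν → Integrable k ν := fun ν _ =>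
    Integrable.of_bound hkL.continuous.measurable.aestronglyMeasurable 1
      (Filter.Eventually.of_forall hkb)
  have hh : ∀ ν : Measure K, IsFiniteMeasure ν →
      ∫ z, h z ∂ν = a * ∫ z, k z ∂ν + h z0 * ν.real univ := by
    intro ν _
    have e : h = fun z => a * k z + h z0 := by
      funext z; simp only [hk]; field_simp; ring
    conv_lhs => rw [e]
    rw [integral_add ((hki ν inferInstance).const_mul a) (integrable_const _),
      integral_const_mul, integral_const, smul_eq_mul, mul_comm (h z0)]
  rw [hh ν₁ inferInstance, hh ν₂ inferInstance]
  have h3 : h z0 * (ν₁.real univ - ν₂.real univ) ≤ Q := by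
    refine (le_abs_self _).trans ?_
    rw [abs_mul]
    calc |h z0| * |ν₁.real univ - ν₂.real univ|
        ≤ 1 * |ν₁.real univ - ν₂.real univ| := by gcongr; exact hb z0
      _ ≤ Q := by rw [one_mul]; exact hQ
  have h4 : a * (∫ z, k z ∂ν₁ - ∫ z, k z ∂ν₂) ≤ a * W := by
    gcongr; exact (le_abs_self _).trans h2
  nlinarith

/-- duality argument, fixed test function -/
theorem ae_test_le (m : Measure (SigmaA N A)) [IsProbabilityMeasure m]
    (hdiam : Metric.diam (Set.univ : Set K) = 1)
    (τ : SigmaA N A → SigmaA N A) (hτ : MeasurePreserving τ m m)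
    (Φ : SigmaA N A × K → SigmaA N A × K) (hΦ : Measurable Φ)
    (hΦ1 : ∀ p, (Φ p).1 = τ p.1) (a : ℝ) (ha : 0 < a)
    (hΦ2 : ∀ x z w, dist (Φ (x, z)).2 (Φ (x, w)).2 ≤ a * dist z w)
    (μ μ' : SignedMeasure (SigmaA N A × K))
    (h : ∀ E, MeasurableSet E → μ' E = μ (Φ ⁻¹' E))
    (hP : (jPos μ).fst ≪ m) (hN : (jNeg μ).fst ≪ m)
    (hP' : (jPos μ').fst ≪ m) (hN' : (jNeg μ').fst ≪ m)
    (hfin : infNorm m μ ≠ ⊤) (hphi : phiSup m μ ≠ ⊤)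
    (g : K → ℝ) (hg : LipschitzWith 1 g) (hgb : ∀ z, |g z| ≤ 1) :
    ∀ᵐ γ ∂m, ∫ z, g z ∂(fiberR m (jPos μ') γ) - ∫ z, g z ∂(fiberR m (jNeg μ') γ) ≤
      a * (infNorm m μ).toReal + (phiSup m μ).toReal := by
  set C := a * (infNorm m μ).toReal + (phiSup m μ).toReal with hC
  have hgm : Measurable g := hg.continuous.measurable
  have hbd : ∀ (f : SigmaA N A × K → ℝ) (ν : Measure (SigmaA N A × K)), IsFiniteMeasure ν →
      Measurable f → (∀ x, |f x| ≤ 1) → Integrable f ν := fun f ν _ hf hb =>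
    Integrable.of_bound hf.aestronglyMeasurable 1 (Filter.Eventually.of_forall hb)
  have hgi : ∀ (ν : Measure (SigmaA N A × K)), IsFiniteMeasure ν →
      Integrable (fun p : SigmaA N A × K => g p.2) ν := fun ν hν =>
    hbd _ ν hν (hgm.comp measurable_snd) fun x => hgb _
  have hu : Integrable (fun γ => ∫ z, g z ∂(fiberR m (jPos μ') γ) -
      ∫ z, g z ∂(fiberR m (jNeg μ') γ)) m :=
    (disint_integrable m _ hP' _ (hgi _ inferInstance)).sub
      (disint_integrable m _ hN' _ (hgi _ inferInstance))
  -- fiberwise bound for the original measure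
  have hv : ∀ᵐ x ∂m, ∫ z, g (Φ (x, z)).2 ∂(fiberR m (jPos μ) x) -
      ∫ z, g (Φ (x, z)).2 ∂(fiberR m (jNeg μ) x) ≤ C := by
    have e1 : ∀ᵐ x ∂m, wDist (fiberR m (jPos μ) x) (fiberR m (jNeg μ) x) ≤ infNorm m μ :=
      ENNReal.ae_le_essSup _
    have e2 : ∀ᵐ x ∂m, ENNReal.ofReal |phiPair m (jPos μ) (jNeg μ) x| ≤ phiSup m μ :=
      ENNReal.ae_le_essSup _
    filter_upwards [e1, e2, fiberR_finite_ae m (jPos μ), fiberR_finite_ae m (jNeg μ)]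
      with x h1 h2 h3 h4
    refine wDist_contract hdiam _ _ a ha (fun z => g (Φ (x, z)).2) ?_ (fun z => hgb _) _ _
      ENNReal.toReal_nonneg ?_ ?_
    · intro z w
      have := hg.dist_le_mul (Φ (x, z)).2 (Φ (x, w)).2
      rw [Real.dist_eq, NNReal.coe_one, one_mul] at this
      exact this.trans (hΦ2 x z w)
    · rwa [ENNReal.ofReal_toReal hfin]
    · rw [fiberR_real_univ, fiberR_real_univ]
      exact (ENNReal.ofReal_le_iff_le_toReal hphi).1 h2
  refine ae_le_of_forall_setIntegral_le hu (integrable_const C) fun B hB _ => ?_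
  -- test function
  set b : SigmaA N A → ℝ := B.indicator 1 with hb
  have hbm : Measurable b := measurable_one.indicator hB
  have hb01 : ∀ x, b x = 0 ∨ b x = 1 := fun x => by
    by_cases hx : x ∈ B <;> simp [hb, hx]
  set f : SigmaA N A × K → ℝ := fun p => b p.1 * g p.2 with hf
  have hfm : Measurable f := (hbm.comp measurable_fst).mul (hgm.comp measurable_snd)
  have hfb : ∀ p, |f p| ≤ 1 := fun p => by
    rcases hb01 p.1 with h0 | h0 <;> simp [hf, h0, hgb]
  have hfi : ∀ (ν : Measure (SigmaA N A × K)), IsFiniteMeasure ν → Integrable f ν :=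
    fun ν hν => hbd _ ν hν hfm hfb
  have hfi' : ∀ (ν : Measure (SigmaA N A × K)), IsFiniteMeasure ν →
      Integrable (fun p => f (Φ p)) ν :=
    fun ν hν => hbd _ ν hν (hfm.comp hΦ) fun p => hfb _
  have s1 : ∫ x in B, (∫ z, g z ∂(fiberR m (jPos μ') x) -
      ∫ z, g z ∂(fiberR m (jNeg μ') x)) ∂m = ∫ p, f p ∂(jPos μ') - ∫ p, f p ∂(jNeg μ') := by
    rw [← disint_integral m _ hP' f (hfi _ inferInstance),
      ← disint_integral m _ hN' f (hfi _ inferInstance),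
      ← integral_sub (disint_integrable m _ hP' f (hfi _ inferInstance))
        (disint_integrable m _ hN' f (hfi _ inferInstance)), ← integral_indicator hB]
    congr 1
    funext x
    simp only [hf, integral_const_mul]
    by_cases hx : x ∈ B <;> simp [hb, hx]
  rw [s1, map_integral μ μ' Φ hΦ h f hfm hfb,
    ← disint_integral m _ hP _ (hfi' _ inferInstance),
    ← disint_integral m _ hN _ (hfi' _ inferInstance),
    ← integral_sub (disint_integrable m _ hP _ (hfi' _ inferInstance))
        (disint_integrable m _ hN _ (hfi' _ inferInstance))]
  have s2 : ∫ x in B, C ∂m = ∫ x, (τ ⁻¹' B).indicator (fun _ => C) x ∂m := by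
    rw [integral_indicator (hτ.measurable hB), setIntegral_const, setIntegral_const,
      hτ.measureReal_preimage hB.nullMeasurableSet]
  rw [s2]
  refine integral_mono_ae ((disint_integrable m _ hP _ (hfi' _ inferInstance)).sub
        (disint_integrable m _ hN _ (hfi' _ inferInstance)))
        ((integrable_const C).indicator (hτ.measurable hB)) ?_
  filter_upwards [hv] with x hx
  simp only [hf, hΦ1, integral_const_mul]
  by_cases hxB : τ x ∈ B
  · simpa [hb, hxB] using hx
  · simp [hb, hxB]

theorem infNorm_le (m : Measure (SigmaA N A)) [IsProbabilityMeasure m]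
    (μ' : SignedMeasure (SigmaA N A × K)) (C : ℝ)
    (hC : ∀ g : K → ℝ, LipschitzWith 1 g → (∀ z, |g z| ≤ 1) → ∀ᵐ γ ∂m,
      ∫ z, g z ∂(fiberR m (jPos μ') γ) - ∫ z, g z ∂(fiberR m (jNeg μ') γ) ≤ C) :
    infNorm m μ' ≤ ENNReal.ofReal C := by
  let S : Set C(K, ℝ) := {g | LipschitzWith 1 g ∧ ∀ z, |g z| ≤ 1}
  obtain ⟨D, hDc, hDd⟩ := TopologicalSpace.exists_countable_dense S
  have hall : ∀ᵐ γ ∂m, ∀ g ∈ D, |∫ z, g.1 z ∂(fiberR m (jPos μ') γ) -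
      ∫ z, g.1 z ∂(fiberR m (jNeg μ') γ)| ≤ C := by
    rw [ae_ball_iff hDc]
    intro g _
    filter_upwards [hC g.1 g.2.1 g.2.2, hC (fun z => - g.1 z) g.2.1.neg
      (fun z => by rw [abs_neg]; exact g.2.2 z)] with γ h1 h2
    rw [integral_neg, integral_neg] at h2
    rw [abs_le]
    constructor <;> linarith
  refine essSup_le_of_ae_le _ ?_
  filter_upwards [hall, fiberR_finite_ae m (jPos μ'), fiberR_finite_ae m (jNeg μ')]
    with γ h1 h2 h3
  refine iSup_le fun g => ?_
  have hcont : ∀ ν : Measure K, IsFiniteMeasure ν → Continuous fun g : S => ∫ z, g.1 z ∂ν := by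
    intro ν _
    refine continuous_of_dominated (bound := fun _ => 1) ?_ ?_ (integrable_const _) ?_
    · intro g; exact g.1.continuous.measurable.aestronglyMeasurable
    · intro g; exact Filter.Eventually.of_forall g.2.2
    · refine Filter.Eventually.of_forall fun z => ?_
      exact (continuous_eval_const z).comp continuous_subtype_val
  have hcl : IsClosed {g : S | |∫ z, g.1 z ∂(fiberR m (jPos μ') γ) -
      ∫ z, g.1 z ∂(fiberR m (jNeg μ') γ)| ≤ C} :=
    isClosed_le (((hcont _ h2).sub (hcont _ h3)).abs) continuous_const
  have hsub := hcl.closure_subset_iff.2 (fun g hg => h1 g hg : D ⊆ _)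
  rw [hDd.closure_eq] at hsub
  have := hsub (mem_univ (⟨⟨g.1, g.2.1.continuous⟩, g.2.1, g.2.2⟩ : S))
  exact ENNReal.ofReal_le_ofReal this

theorem transfer_iterate_apply (G : SigmaA N A × K → K) (hGm : Measurable (skew G)) (n : ℕ) :
    ∀ (μ : SignedMeasure (SigmaA N A × K)) (E : Set (SigmaA N A × K)), MeasurableSet E →
    (transfer G)^[n] μ E = μ ((skew G)^[n] ⁻¹' E) := by
  induction n with
  | zero => intro μ E _; rfl
  | succ n ih =>
    intro μ E hE
    rw [Function.iterate_succ_apply, ih _ E hE, transfer,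
      VectorMeasure.map_apply _ hGm ((hGm.iterate n) hE), ← preimage_comp,
      ← Function.iterate_succ]

theorem skew_iterate_fst (G : SigmaA N A × K → K) (n : ℕ) (p : SigmaA N A × K) :
    ((skew G)^[n] p).1 = shift^[n] p.1 := by
  induction n with
  | zero => rfl
  | succ n ih => rw [Function.iterate_succ_apply', Function.iterate_succ_apply', ← ih]; rfl

theorem skew_iterate_dist (G : SigmaA N A × K → K) (α : ℝ) (hα0 : 0 < α) (hG1 : CondG1 G α)
    (n : ℕ) (x : SigmaA N A) (z w : K) :
    dist ((skew G)^[n] (x, z)).2 ((skew G)^[n] (x, w)).2 ≤ α ^ n * dist z w := by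
  induction n with
  | zero => simp
  | succ n ih =>
    rw [Function.iterate_succ_apply', Function.iterate_succ_apply']
    have e : ((skew G)^[n] (x, z)).1 = ((skew G)^[n] (x, w)).1 := by
      rw [skew_iterate_fst, skew_iterate_fst]
    have := hG1 ((skew G)^[n] (x, z)).1 ((skew G)^[n] (x, z)).2 ((skew G)^[n] (x, w)).2
    calc dist (skew G ((skew G)^[n] (x, z))).2 (skew G ((skew G)^[n] (x, w))).2
        ≤ α * dist ((skew G)^[n] (x, z)).2 ((skew G)^[n] (x, w)).2 := by
          refine le_trans (le_of_eq ?_) this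
          conv_rhs => enter [2]; rw [e]
          rfl
      _ ≤ α * (α ^ n * dist z w) := by gcongr
      _ = α ^ (n + 1) * dist z w := by ring

/-- Under (G1), for every `μ ∈ S^∞` and `n ≥ 1`,
`‖F^{*n}μ‖_∞ ≤ α^n ‖μ‖_∞ + (1/(1-α)) ‖φ₁‖_∞`. -/
theorem transfer_infNorm_LasotaYorke_iterated
    (N : ℕ) (A : Fin N → Fin N → Bool) (hA : Aperiodic A)
    (θ : ℝ) (hθ0 : 0 < θ) (hθ1 : θ < 1)
    (m : Measure (SigmaA N A)) [IsProbabilityMeasure m]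
    (hmM : IsMarkov m) (hminv : m.map shift = m)
    {K : Type*} [MetricSpace K] [CompactSpace K] [Nonempty K]
    [MeasurableSpace K] [BorelSpace K]
    (hdiam : Metric.diam (Set.univ : Set K) = 1)
    (G : SigmaA N A × K → K) (hGm : Measurable (skew G))
    (α : ℝ) (hα0 : 0 < α) (hα1 : α < 1) (hG1 : CondG1 G α)
    (μ : SignedMeasure (SigmaA N A × K)) (hμ : MemS m θ μ) :
    ∀ n : ℕ, 1 ≤ n →
      infNorm m ((transfer G)^[n] μ) ≤
        ENNReal.ofReal (α ^ n) * infNorm m μ +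
          ENNReal.ofReal (1 / (1 - α)) * phiSup m μ := by
  intro n _
  have hc : 0 < 1 / (1 - α) := by
    have : 0 < 1 - α := by linarith
    positivity
  obtain ⟨⟨hP, hN, _, _⟩, hfin, _⟩ := hμ
  have hfin : infNorm m μ ≠ ⊤ := hfin.ne
  by_cases hphi : phiSup m μ = ⊤
  · rw [hphi, ENNReal.mul_top (by simpa using hc), add_top]
    exact le_top
  have hτ : MeasurePreserving (shift^[n]) m m :=
    MeasurePreserving.iterate ⟨measurable_shift, hminv⟩ n
  have hΦ := hGm.iterate n
  have hmap := transfer_iterate_apply G hGm n μ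
  have hsum : (jPos μ + jNeg μ).fst ≪ m := by
    rw [Measure.fst, Measure.map_add _ _ measurable_fst]
    exact Measure.AbsolutelyContinuous.add_left hP hN
  obtain ⟨ac1, ac2⟩ := map_ac μ _ _ hΦ hmap
  have hP' := map_fst_ac m _ hsum _ hτ _ hΦ (skew_iterate_fst G n) _ ac1
  have hN' := map_fst_ac m _ hsum _ hτ _ hΦ (skew_iterate_fst G n) _ ac2
  have hmain := infNorm_le m ((transfer G)^[n] μ) _
    (ae_test_le m hdiam _ hτ _ hΦ (skew_iterate_fst G n) (α ^ n) (by positivity)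
      (skew_iterate_dist G α hα0 hG1 n) μ _ hmap hP hN hP' hN' hfin hphi)
  refine hmain.trans ?_
  rw [ENNReal.ofReal_add (by positivity) ENNReal.toReal_nonneg,
    ENNReal.ofReal_mul (by positivity), ENNReal.ofReal_toReal hfin, ENNReal.ofReal_toReal hphi]
  gcongr
  refine le_mul_of_one_le_left' ?_
  rw [ENNReal.one_le_ofReal, le_div_iff₀ (by linarith)]
  linarith

end RDS
end
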